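/- For every integer k ≥ 1, every graph G with chromatic number χ(G) ≥ (3 + 1/16)k contains a (k+1)-connected subgraph with more than χ(G) − k vertices and chromatic number at least χ(G) − 2k + 2. -/

import Mathlib

variable {V : Type*}

/-- `G` is `n`-connected: it has more than `n` vertices and no cutset of fewer than `n`
vertices. -/
def KConnected (G : SimpleGraph V) (n : ℕ) : Prop :=
  n < Nat.card V ∧ ∀ X : Set V, X.ncard < n →
    ¬ ∃ A B : Set V, A.Nonempty ∧ B.Nonempty ∧ Disjoint A B ∧ A ∪ B = Xᶜ ∧
        ∀ a ∈ A, ∀ b ∈ B, ¬ G.Adj a b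

/-!
Write `n = m + 1`. Since `G` is not `m`-colourable, it has a minimal finite non-`m`-colourable
induced subgraph `S`, whose minimum degree is at least `m ≥ 3k`. Weigh the boundary of `A ⊆ S` by
counting the edges leaving `A`, at most `k` for each vertex outside, and let `A` be minimal
among the subsets of `S` of size at least `k` and boundary weight less than `2k²`. Let `X` be the
set of outside vertices with more than `k` neighbours in `A`, and `D` that of the others. Minimality
of `A` shows that its vertices have fewer than `k` neighbours in `D`. The subgraph sought is the one
induced on `A ∪ X`.

* Connectivity: suppose that at most `k` vertices separate `A ∪ X`. Each side meets `A`. For each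
  side, count `k` for every separating vertex and every vertex of `X` on that side, and `1` for
  every edge from `A` on that side to `D`. The result is at least `2k²`: by minimality of `A` if the
  side contains `k` vertices of `A`, and by the minimum degree otherwise. But the two counts
  together exceed the boundary weight of `A` by at most `2k²`, a contradiction.
* Chromatic number: let `c` be an `m`-colouring of `S \ A` and `h` an `(m + 2 - 2k)`-colouring of
  `A ∪ X`. As few edges leave `A`, a Hall-type argument refines `h` on `A` to a colouring by colours
  not used by `c` on `X`, each vertex avoiding the colours of its neighbours in `D`. Together with
  `c` this would be an `m`-colouring of `S`.
-/

open Finset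

section Assignment

variable {α β ι : Type*} [DecidableEq β] {A : Finset α} {C : Finset β} {F : α → Finset β}
  {K ℓ : ℕ}

theorem card_le_card_of_card_notMem_le (hKℓ : K ≤ ℓ)
    (hallowed : ∀ j ∈ C, #{u ∈ A | j ∉ F u} ≤ ℓ)
    (hsum : ∑ u ∈ A, #(F u) + K * ℓ < K * (#C + 1)) : #A ≤ #C := by
  have hcount : #A * #C ≤ #C * ℓ + ∑ u ∈ A, #(F u) := calc
    #A * #C = ∑ _u ∈ A, #C := by simp
    _ ≤ ∑ u ∈ A, (#{j ∈ C | j ∉ F u} + #(F u)) := sum_le_sum fun u _ => by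
        rw [← sdiff_eq_filter]
        have := le_card_sdiff (F u) C
        omega
    _ = ∑ j ∈ C, #{u ∈ A | j ∉ F u} + ∑ u ∈ A, #(F u) := by
        rw [sum_add_distrib]
        congr 1
        exact sum_card_bipartiteAbove_eq_sum_card_bipartiteBelow fun u j => j ∉ F u
    _ ≤ #C * ℓ + ∑ u ∈ A, #(F u) := by
        gcongr
        simpa using sum_le_sum hallowed
  have hℓC : ℓ ≤ #C := by
    have : K * ℓ < K * (#C + 1) := by omega
    exact Nat.le_of_lt_succ (Nat.lt_of_mul_lt_mul_left this)
  by_contra! hlt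
  obtain ⟨d, hd⟩ := Nat.exists_eq_add_of_le hℓC
  have hrows : (#C + 1) * #C ≤ #A * #C := Nat.mul_le_mul_right _ hlt
  have hKC : K * (d + 1) ≤ #C * (d + 1) := Nat.mul_le_mul_right _ (hKℓ.trans hℓC)
  nlinarith

theorem card_le_card_biUnion_sdiff (hKℓ : K ≤ ℓ) (hF : ∀ u ∈ A, #(F u) < K)
    (hcommon : ∀ j ∈ C, #{u ∈ A | j ∈ F u} < K)
    (hsum : ∑ u ∈ A, #(F u) + K * ℓ < K * (#C + 1)) (hAC : #A ≤ #C) {I : Finset α}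
    (hI : I ⊆ A) : #I ≤ #(I.biUnion fun u => C \ F u) := by
  by_contra! hlt
  set B := I.biUnion fun u => C \ F u
  have hBC : B ⊆ C := biUnion_subset.2 fun _ _ => sdiff_subset
  have hcardB := card_sdiff_add_card_eq_card hBC
  have hforbidden : ∀ j ∈ C \ B, ∀ u ∈ I, j ∈ F u := by
    intro j hj u hu
    by_contra hjF
    rw [mem_sdiff] at hj
    exact hj.2 (mem_biUnion.2 ⟨u, hu, mem_sdiff.2 ⟨hj.1, hjF⟩⟩)
  have hload : ∀ u ∈ I, #(C \ B) ≤ #(F u) := fun u hu =>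
    card_le_card fun j hj => hforbidden j hj u hu
  obtain ⟨u₀, hu₀⟩ : I.Nonempty := card_pos.1 (by omega)
  obtain ⟨j₀, hj₀⟩ : (C \ B).Nonempty := card_pos.1 (by have := card_le_card hI; omega)
  have hIK : #I < K :=
    (card_le_card fun u hu => mem_filter.2 ⟨hI hu, hforbidden j₀ hj₀ u hu⟩).trans_lt
      (hcommon j₀ (sdiff_subset hj₀))
  have hJK : #(C \ B) < K := (hload u₀ hu₀).trans_lt (hF u₀ (hI hu₀))
  have htotal : #I * #(C \ B) ≤ ∑ u ∈ A, #(F u) :=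
    (by simpa using sum_le_sum hload : _ ≤ ∑ u ∈ I, #(F u)).trans (sum_le_sum_of_subset hI)
  have hIJ : #C + 1 ≤ #I + #(C \ B) := by omega
  zify at *
  nlinarith [mul_nonneg (sub_nonneg.2 hIK.le) (sub_nonneg.2 hJK.le)]

theorem exists_injOn_mem_sdiff (hKℓ : K ≤ ℓ) (hF : ∀ u ∈ A, #(F u) < K)
    (hcommon : ∀ j ∈ C, #{u ∈ A | j ∈ F u} < K) (hallowed : ∀ j ∈ C, #{u ∈ A | j ∉ F u} ≤ ℓ)
    (hsum : ∑ u ∈ A, #(F u) + K * ℓ < K * (#C + 1)) :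
    ∃ g : α → β, Set.InjOn g A ∧ ∀ u ∈ A, g u ∈ C \ F u := by
  have hAC := card_le_card_of_card_notMem_le hKℓ hallowed hsum
  classical
  obtain ⟨f, hf_inj, hf⟩ :=
    (all_card_le_biUnion_card_iff_exists_injective fun u : A => C \ F u).1 fun I => by
      simpa [map_eq_image, image_biUnion, card_image_of_injective _ Subtype.val_injective] using
        card_le_card_biUnion_sdiff hKℓ hF hcommon hsum hAC
          (I := I.map (.subtype _)) (map_subtype_subset I)
  obtain ⟨j₀, -⟩ : C.Nonempty := by
    have hℓC : ℓ < #C + 1 := Nat.lt_of_mul_lt_mul_left (a := K) (by omega)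
    have hK : 0 < K := Nat.pos_of_mul_pos_right (Nat.zero_lt_of_lt hsum)
    exact card_pos.1 (by omega)
  refine ⟨fun u => if hu : u ∈ A then f ⟨u, hu⟩ else j₀, fun u hu v hv huv => ?_, fun u hu => ?_⟩
  · rw [mem_coe] at hu hv
    simpa [hu, hv, hf_inj.eq_iff] using huv
  · simpa only [hu, dif_pos] using hf ⟨u, hu⟩

/-- `g` gives every item `u ∈ A` a colour of `C` outside its list `F u` of forbidden colours, and
only items of the same class of `h` share a colour. -/
def IsRefinedAssignment (h : α → ι) (A : Finset α) (C : Finset β) (F : α → Finset β)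
    (g : α → β) : Prop :=
  (∀ u ∈ A, g u ∈ C \ F u) ∧ ∀ u ∈ A, ∀ v ∈ A, g u = g v → h u = h v

namespace IsRefinedAssignment

variable {h : α → ι} {g : α → β} {u v : α} {j : β}

theorem of_erase (hg : IsRefinedAssignment h A (C.erase j) (fun u => (F u).erase j) g) :
    IsRefinedAssignment h A C F g := by
  refine ⟨fun u hu => ?_, hg.2⟩
  have := hg.1 u hu
  simp only [mem_sdiff, mem_erase] at this ⊢
  tauto

theorem piecewise_pair [DecidableEq α]
    (hg : IsRefinedAssignment h (A \ {u, v}) (C.erase j) F g) (hj : j ∈ C)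
    (hju : j ∉ F u) (hjv : j ∉ F v) (huv : h u = h v) :
    IsRefinedAssignment h A C F (({u, v} : Finset α).piecewise (fun _ => j) g) := by
  have hg_mem : ∀ w ∈ A, w ∉ ({u, v} : Finset α) → (g w ∈ C ∧ g w ∉ F w) ∧ g w ≠ j := by
    intro w hw hw'
    have := hg.1 w (mem_sdiff.2 ⟨hw, hw'⟩)
    simp only [mem_sdiff, mem_erase] at this
    tauto
  have hpair : ∀ w ∈ ({u, v} : Finset α), h w = h v ∧ j ∉ F w := by
    simp [huv, hju, hjv]
  refine ⟨fun w hw => ?_, fun w hw w' hw' heq => ?_⟩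
  · by_cases hwp : w ∈ ({u, v} : Finset α)
    · simpa [piecewise_eq_of_mem _ _ _ hwp, hj] using (hpair w hwp).2
    · simpa [piecewise_eq_of_notMem _ _ _ hwp] using (hg_mem w hw hwp).1
  · by_cases hwp : w ∈ ({u, v} : Finset α) <;> by_cases hwp' : w' ∈ ({u, v} : Finset α) <;>
      simp only [piecewise_eq_of_mem, piecewise_eq_of_notMem, hwp, hwp', not_false_eq_true]
        at heq
    · rw [(hpair w hwp).1, (hpair w' hwp').1]
    · exact absurd heq.symm (hg_mem w' hw' hwp').2
    · exact absurd heq (hg_mem w hw hwp).2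
    · exact hg.2 w (mem_sdiff.2 ⟨hw, hwp⟩) w' (mem_sdiff.2 ⟨hw', hwp'⟩) heq

theorem of_merge [DecidableEq α]
    (hg : IsRefinedAssignment h (A.erase v) C (Function.update F u (F u ∪ F v)) g)
    (hu : u ∈ A) (hne : u ≠ v) (huv : h u = h v) :
    IsRefinedAssignment h A C F (Function.update g v (g u)) := by
  have hg_u : g u ∈ C \ (F u ∪ F v) := by
    simpa using hg.1 u (mem_erase.2 ⟨hne, hu⟩)
  have hg_mem : ∀ w ∈ A, w ≠ v → g w ∈ C \ F w := by
    intro w hw hwv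
    rcases eq_or_ne w u with rfl | hwu
    · exact sdiff_subset_sdiff Subset.rfl subset_union_left hg_u
    · simpa [hwu] using hg.1 w (mem_erase.2 ⟨hwv, hw⟩)
  have hg_refines : ∀ w ∈ A, w ≠ v → ∀ w' ∈ A, w' ≠ v → g w = g w' → h w = h w' :=
    fun w hw hwv w' hw' hwv' => hg.2 w (mem_erase.2 ⟨hwv, hw⟩) w' (mem_erase.2 ⟨hwv', hw'⟩)
  refine ⟨fun w hw => ?_, fun w hw w' hw' heq => ?_⟩
  · by_cases hwv : w = v
    · subst hwv
      simpa using sdiff_subset_sdiff Subset.rfl subset_union_right hg_u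
    · simpa [hwv] using hg_mem w hw hwv
  · by_cases hwv : w = v <;> by_cases hwv' : w' = v
    · rw [hwv, hwv']
    · rw [hwv, ← huv]
      exact hg_refines u hu hne w' hw' hwv' (by simpa [hwv, hwv'] using heq)
    · rw [hwv', ← huv]
      exact hg_refines w hw hwv u hu hne (by simpa [hwv, hwv'] using heq)
    · exact hg_refines w hw hwv w' hw' hwv' (by simpa [hwv, hwv'] using heq)

end IsRefinedAssignment

theorem sum_card_erase_add_card_filter (A : Finset α) (F : α → Finset β) (j : β) :
    ∑ u ∈ A, #((F u).erase j) + #{u ∈ A | j ∈ F u} = ∑ u ∈ A, #(F u) := by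
  rw [card_filter, ← sum_add_distrib]
  refine sum_congr rfl fun u _ => ?_
  split_ifs with hj
  · exact card_erase_add_one hj
  · rw [erase_eq_of_notMem hj, add_zero]

theorem sum_sdiff_pair_add [DecidableEq α] {u v : α} (hu : u ∈ A) (hv : v ∈ A) (hne : u ≠ v)
    (w : α → ℕ) : ∑ x ∈ A \ {u, v}, w x + (w u + w v) = ∑ x ∈ A, w x := by
  rw [← sum_pair hne]
  exact sum_sdiff (insert_subset hu (singleton_subset_iff.2 hv))

theorem sum_card_update_union_le [DecidableEq α] {u v : α} (hu : u ∈ A) (hv : v ∈ A) (hne : u ≠ v) :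
    ∑ w ∈ A.erase v, #(Function.update F u (F u ∪ F v) w) ≤ ∑ w ∈ A, #(F w) := by
  have hu' : u ∈ A.erase v := mem_erase.2 ⟨hne, hu⟩
  rw [← add_sum_erase _ _ hu', ← add_sum_erase A _ hv, ← add_sum_erase _ _ hu',
    Function.update_self]
  have hrest : ∑ w ∈ (A.erase v).erase u, #(Function.update F u (F u ∪ F v) w) =
      ∑ w ∈ (A.erase v).erase u, #(F w) :=
    sum_congr rfl fun w hw => by rw [Function.update_of_ne (ne_of_mem_erase hw)]
  have := card_union_le (F u) (F v)
  omega

theorem exists_isRefinedAssignment_of_forall_pair [DecidableEq ι] (h : α → ι) (hKℓ : K ≤ ℓ)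
    (hh : #(A.image h) ≤ ℓ) (hF : ∀ u ∈ A, #(F u) < K)
    (hcommon : ∀ j ∈ C, #{u ∈ A | j ∈ F u} < K)
    (hpair : ∀ u ∈ A, ∀ v ∈ A, u ≠ v → h u = h v → ∀ j ∈ C, j ∉ F u → j ∈ F v)
    (hsum : ∑ u ∈ A, #(F u) + K * ℓ < K * (#C + 1)) : ∃ g, IsRefinedAssignment h A C F g := by
  have hallowed : ∀ j ∈ C, #{u ∈ A | j ∉ F u} ≤ ℓ := by
    refine fun j hj => le_trans ?_ hh
    rw [← card_image_of_injOn (f := h) (s := {u ∈ A | j ∉ F u})]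
    · exact card_le_card (image_subset_image (filter_subset _ _))
    intro u hu v hv huv
    simp only [coe_filter, Set.mem_ofPred_eq] at hu hv
    by_contra hne
    exact hv.2 (hpair u hu.1 v hv.1 hne huv j hj hu.2)
  obtain ⟨g, hg_inj, hg⟩ := exists_injOn_mem_sdiff hKℓ hF hcommon hallowed hsum
  exact ⟨g, hg, fun u hu v hv huv => congrArg h (hg_inj hu hv huv)⟩

-- Induction: a colour forbidden to `K` items is discarded; two items of one class that may share a
-- colour either get one, which is used up, or are merged into a single item with the union of their
-- lists, according to whether their lists have total size at least `K`. Each step keeps `hsum`, and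
-- when none applies Hall's theorem gives distinct colours to all items.
theorem exists_isRefinedAssignment [DecidableEq ι] {A : Finset α} {C : Finset β}
    {F : α → Finset β} (h : α → ι) (hKℓ : K ≤ ℓ) (hh : #(A.image h) ≤ ℓ)
    (hF : ∀ u ∈ A, #(F u) < K) (hsum : ∑ u ∈ A, #(F u) + K * ℓ < K * (#C + 1)) :
    ∃ g, IsRefinedAssignment h A C F g := by
  classical
  by_cases hcommon : ∃ j ∈ C, K ≤ #{u ∈ A | j ∈ F u}
  · obtain ⟨j, hj, hjK⟩ := hcommon
    have hcard := card_erase_add_one hj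
    have hsplit := sum_card_erase_add_card_filter A F j
    obtain ⟨g, hg⟩ := exists_isRefinedAssignment (C := C.erase j) (F := fun u => (F u).erase j)
      h hKℓ hh (fun u hu => card_erase_le.trans_lt (hF u hu)) (by
        rw [← hcard] at hsum
        linarith)
    exact ⟨g, hg.of_erase⟩
  by_cases hpair : ∃ u ∈ A, ∃ v ∈ A, u ≠ v ∧ h u = h v ∧ ∃ j ∈ C, j ∉ F u ∧ j ∉ F v
  · obtain ⟨u, hu, v, hv, hne, huv, j, hj, hju, hjv⟩ := hpair
    rcases le_or_gt K (#(F u) + #(F v)) with hheavy | hlight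
    · have hcard := card_erase_add_one hj
      have hcard_sdiff : #(A \ {u, v}) ≤ #A := card_le_card sdiff_subset
      have hsplit := sum_sdiff_pair_add hu hv hne fun u => #(F u)
      obtain ⟨g, hg⟩ := exists_isRefinedAssignment (A := A \ {u, v}) (C := C.erase j) h hKℓ
        ((card_le_card (image_subset_image sdiff_subset)).trans hh)
        (fun w hw => hF w (sdiff_subset hw)) (by
          rw [← hcard] at hsum
          linarith)
      exact ⟨_, hg.piecewise_pair hj hju hjv huv⟩
    · have := card_erase_lt_of_mem hv
      obtain ⟨g, hg⟩ := exists_isRefinedAssignment (A := A.erase v)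
        (F := Function.update F u (F u ∪ F v)) h hKℓ
        ((card_le_card (image_subset_image (erase_subset _ _))).trans hh)
        (fun w hw => by
          rcases eq_or_ne w u with rfl | hwu
          · simpa using (card_union_le _ _).trans_lt hlight
          · simpa [hwu] using hF w (mem_of_mem_erase hw))
        ((Nat.add_le_add_right (sum_card_update_union_le hu hv hne) _).trans_lt hsum)
      exact ⟨_, hg.of_merge hu hne huv⟩
  push Not at hcommon hpair
  exact exists_isRefinedAssignment_of_forall_pair h hKℓ hh hF hcommon hpair hsum
termination_by #A + #C

end Assignment


section DegIn

variable (G : SimpleGraph V) [DecidableRel G.Adj] (A B : Finset V) (v : V)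

/-- The number of neighbours of `v` in `A`. -/
def degIn : ℕ :=
  #{u ∈ A | G.Adj v u}

theorem degIn_le_card : degIn G A v ≤ #A :=
  card_filter_le _ _

theorem sum_degIn_comm : ∑ v ∈ B, degIn G A v = ∑ u ∈ A, degIn G B u := by
  simp only [degIn, card_filter]
  rw [sum_comm]
  simp only [G.adj_comm]

variable {G A B v}

theorem degIn_lt_card (hv : v ∈ A) : degIn G A v < #A :=
  card_lt_card (filter_ssubset.2 ⟨v, hv, G.irrefl⟩)

theorem degIn_mono (hAB : A ⊆ B) : degIn G A v ≤ degIn G B v :=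
  card_le_card (filter_subset_filter _ hAB)

theorem degIn_eq_zero_iff : degIn G A v = 0 ↔ ∀ u ∈ A, ¬ G.Adj v u := by
  rw [degIn, card_eq_zero, filter_eq_empty_iff]

variable [DecidableEq V]

variable (G A B v) in
theorem degIn_union_le : degIn G (A ∪ B) v ≤ degIn G A v + degIn G B v := by
  rw [degIn, filter_union]
  exact card_union_le _ _

theorem degIn_union_of_disjoint (hAB : Disjoint A B) :
    degIn G (A ∪ B) v = degIn G A v + degIn G B v := by
  rw [degIn, filter_union]
  exact card_union_of_disjoint (disjoint_filter_filter hAB)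

theorem degIn_erase_add_ite {u : V} (hu : u ∈ A) :
    degIn G (A.erase u) v + (if G.Adj v u then 1 else 0) = degIn G A v := by
  rw [degIn, degIn, card_filter, card_filter, sum_erase_add _ _ hu]

end DegIn

section IsColoringOn

variable {G : SimpleGraph V} {S T : Set V} {α : Type*} {c g : V → α} {m : ℕ}

/-- `c` is a proper colouring of the subgraph of `G` induced on `S`; its values outside `S` are
irrelevant. -/
def IsColoringOn (G : SimpleGraph V) (S : Set V) (c : V → α) : Prop :=
  ∀ u ∈ S, ∀ v ∈ S, G.Adj u v → c u ≠ c v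

theorem IsColoringOn.mono (hc : IsColoringOn G T c) (hST : S ⊆ T) : IsColoringOn G S c :=
  fun u hu v hv => hc u (hST hu) v (hST hv)

theorem IsColoringOn.piecewise [∀ v, Decidable (v ∈ S)] (hg : IsColoringOn G S g)
    (hc : IsColoringOn G T c) (hgc : ∀ u ∈ S, ∀ v ∈ T, G.Adj u v → g u ≠ c v) :
    IsColoringOn G (S ∪ T) (S.piecewise g c) := by
  intro u hu v hv huv
  by_cases huS : u ∈ S <;> by_cases hvS : v ∈ S <;>
    simp only [Set.piecewise_eq_of_mem, Set.piecewise_eq_of_notMem, huS, hvS, not_false_eq_true]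
  · exact hg u huS v hvS huv
  · exact hgc u huS v (hv.resolve_left hvS) huv
  · exact (hgc v hvS u (hu.resolve_left huS) huv.symm).symm
  · exact hc u (hu.resolve_left huS) v (hv.resolve_left hvS) huv

theorem IsColoringOn.colorable {c : V → Fin m} (hc : IsColoringOn G S c) :
    (G.induce S).Colorable m :=
  ⟨SimpleGraph.Coloring.mk (fun v => c v) fun {u v} huv => hc u u.2 v v.2 huv⟩

theorem exists_isColoringOn [NeZero m] (hS : (G.induce S).Colorable m) :
    ∃ c : V → Fin m, IsColoringOn G S c := by
  obtain ⟨f⟩ := hS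
  classical
  refine ⟨fun v => if hv : v ∈ S then f ⟨v, hv⟩ else 0, fun u hu v hv huv => ?_⟩
  simp only [hu, hv, dif_pos]
  exact f.valid (v := ⟨u, hu⟩) (w := ⟨v, hv⟩) huv

end IsColoringOn

section Critical

variable {G : SimpleGraph V} {S : Finset V} {m : ℕ}

/-- `S` is a minimal finite set of vertices that cannot be properly coloured with `m` colours. -/
def IsCritical (G : SimpleGraph V) (m : ℕ) (S : Finset V) : Prop :=
  Minimal (fun T : Finset V => ¬ (G.induce (T : Set V)).Colorable m) S

-- By the de Bruijn–Erdős theorem some finite induced subgraph needs more than `m` colours.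
theorem exists_isCritical (hG : ¬ G.Colorable m) : ∃ S, IsCritical G m S := by
  refine exists_minimal_of_wellFoundedLT _ ?_
  contrapose! hG
  refine SimpleGraph.nonempty_hom_of_forall_finite_subgraph_hom fun H hH => ?_
  have hcol := hG hH.toFinset
  rw [hH.coe_toFinset] at hcol
  exact hcol.some.comp ⟨id, fun huv => huv.adj_sub⟩

namespace IsCritical

theorem nonempty (hS : IsCritical G m S) : S.Nonempty := by
  by_contra! hempty
  subst hempty
  have : IsEmpty ((∅ : Finset V) : Set V) := by simp
  exact hS.prop (SimpleGraph.Colorable.of_isEmpty _)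

theorem colorable_of_ssubset (hS : IsCritical G m S) {T : Finset V} (hT : T ⊂ S) :
    (G.induce (T : Set V)).Colorable m :=
  not_not.1 fun h => hS.not_prop_of_lt hT h

theorem le_degIn [DecidableRel G.Adj] (hS : IsCritical G m S) {u : V} (hu : u ∈ S) :
    m ≤ degIn G S u := by
  classical
  rcases eq_zero_or_neZero m with rfl | _
  · exact Nat.zero_le _
  by_contra! hlt
  obtain ⟨c, hc⟩ := exists_isColoringOn (hS.colorable_of_ssubset (erase_ssubset hu))
  obtain ⟨j, -, hj⟩ := exists_mem_notMem_of_card_lt_card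
    (s := {v ∈ S | G.Adj u v}.image c) (t := univ)
    (card_image_le.trans_lt (by rw [card_univ, Fintype.card_fin]; exact hlt))
  have hsing : IsColoringOn G {u} fun _ => j := by
    rintro v rfl w rfl h
    exact absurd h G.irrefl
  have hcol := hsing.piecewise hc fun v hv w hw huw hjw => hj (mem_image.2
    ⟨w, mem_filter.2 ⟨mem_of_mem_erase hw, Set.mem_singleton_iff.1 hv ▸ huw⟩, hjw.symm⟩)
  refine hS.prop (hcol.mono ?_).colorable
  intro v hv
  rcases eq_or_ne v u with rfl | hne
  · exact Or.inl rfl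
  · exact Or.inr (mem_erase.2 ⟨hne, hv⟩)

theorem lt_card (hS : IsCritical G m S) : m < #S := by
  classical
  obtain ⟨u, hu⟩ := hS.nonempty
  exact (hS.le_degIn hu).trans_lt (degIn_lt_card hu)

end IsCritical

end Critical

section Boundary

variable (G : SimpleGraph V) [DecidableEq V] [DecidableRel G.Adj] (S : Finset V) (k : ℕ)
  (A : Finset V)

/-- The number of edges between `A` and `S \ A`, each vertex of `S \ A` accounting for at most `k`
of them. -/
def boundaryWeight : ℕ :=
  ∑ v ∈ S \ A, min k (degIn G A v)

/-- The vertices of `S \ A` with more than `k` neighbours in `A`. -/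
def heavyBoundary : Finset V :=
  {v ∈ S \ A | k < degIn G A v}

/-- The vertices of `S \ A` with at most `k` neighbours in `A`, including those with none. -/
def lightBoundary : Finset V :=
  {v ∈ S \ A | degIn G A v ≤ k}

theorem boundaryWeight_eq : boundaryWeight G S k A =
    k * #(heavyBoundary G S k A) + ∑ v ∈ lightBoundary G S k A, degIn G A v := by
  rw [boundaryWeight, ← sum_filter_add_sum_filter_not (S \ A) fun v => k < degIn G A v]
  congr 1
  · rw [sum_congr rfl fun v hv => min_eq_left (mem_filter.1 hv).2.le]
    simp [heavyBoundary, mul_comm]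
  · simp only [not_lt]
    exact sum_congr rfl fun v hv => min_eq_right (mem_filter.1 hv).2

theorem heavyBoundary_union_lightBoundary :
    heavyBoundary G S k A ∪ lightBoundary G S k A = S \ A := by
  simp only [heavyBoundary, lightBoundary, ← not_lt, filter_union_filter_not_eq]

variable {G S k A}

theorem union_heavyBoundary_union_lightBoundary (hA : A ⊆ S) :
    A ∪ heavyBoundary G S k A ∪ lightBoundary G S k A = S := by
  rw [union_assoc, heavyBoundary_union_lightBoundary, union_sdiff_of_subset hA]

theorem degIn_le_degIn_union_heavyBoundary_add (hA : A ⊆ S) (u : V) :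
    degIn G S u ≤ degIn G (A ∪ heavyBoundary G S k A) u + degIn G (lightBoundary G S k A) u := by
  conv_lhs => rw [← union_heavyBoundary_union_lightBoundary (G := G) (k := k) hA]
  exact degIn_union_le G _ _ u

theorem boundaryWeight_erase_add_degIn_le (hA : A ⊆ S) {u : V} (hu : u ∈ A) :
    boundaryWeight G S k (A.erase u) + degIn G (lightBoundary G S k A) u ≤
      boundaryWeight G S k A + k := by
  have hdeg : degIn G (lightBoundary G S k A) u =
      ∑ v ∈ S \ A, if degIn G A v ≤ k ∧ G.Adj u v then 1 else 0 := by
    rw [degIn, lightBoundary, filter_filter, card_filter]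
  have hterm (v : V) : (min k (degIn G (A.erase u) v) +
      if degIn G A v ≤ k ∧ G.Adj u v then 1 else 0) ≤ min k (degIn G A v) := by
    have herase := degIn_erase_add_ite (G := G) (v := v) hu
    by_cases huv : G.Adj u v
    · simp only [huv, huv.symm, if_true, and_true] at herase ⊢
      split_ifs <;> omega
    · simp only [huv, and_false, if_false, add_zero]
      omega
  calc boundaryWeight G S k (A.erase u) + degIn G (lightBoundary G S k A) u
      = min k (degIn G (A.erase u) u) + ∑ v ∈ S \ A, (min k (degIn G (A.erase u) v) +
          if degIn G A v ≤ k ∧ G.Adj u v then 1 else 0) := by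
        rw [boundaryWeight, sdiff_erase (hA hu), sum_insert (by simp [hu]), hdeg,
          sum_add_distrib, add_assoc]
    _ ≤ k + boundaryWeight G S k A := by
        gcongr
        · exact min_le_left _ _
        · exact sum_le_sum fun v _ => hterm v
    _ = boundaryWeight G S k A + k := add_comm _ _

end Boundary

section Separation

variable {G : SimpleGraph V} [DecidableEq V] {T Z P Q : Finset V}

/-- `Z` separates `P` from `Q` in the subgraph of `G` induced on `T`. The sides `P` and `Q` may be
empty, and only they are required to be disjoint. -/
structure IsSeparation (G : SimpleGraph V) (T Z P Q : Finset V) : Prop where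
  union_eq : Z ∪ P ∪ Q = T
  disjoint : Disjoint P Q
  not_adj : ∀ u ∈ P, ∀ v ∈ Q, ¬ G.Adj u v

namespace IsSeparation

theorem symm (h : IsSeparation G T Z P Q) : IsSeparation G T Z Q P where
  union_eq := by rw [union_right_comm, h.union_eq]
  disjoint := h.disjoint.symm
  not_adj := fun u hu v hv huv => h.not_adj v hv u hu huv.symm

variable [DecidableRel G.Adj]

theorem degIn_lt (h : IsSeparation G T Z P Q) {u : V} (hu : u ∈ P) :
    degIn G T u < #Z + #P := by
  have hQ : degIn G Q u = 0 := degIn_eq_zero_iff.2 (h.not_adj u hu)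
  calc degIn G T u ≤ degIn G Z u + degIn G P u + degIn G Q u := by
        rw [← h.union_eq]
        exact (degIn_union_le G _ _ u).trans (Nat.add_le_add_right (degIn_union_le G _ _ u) _)
    _ < #Z + #P := by
        rw [hQ, add_zero]
        exact add_lt_add_of_le_of_lt (degIn_le_card G Z u) (degIn_lt_card hu)

variable {S A : Finset V} {k : ℕ}

theorem inter_nonempty (hsep : IsSeparation G (A ∪ heavyBoundary G S k A) Z P Q) (hZ : #Z ≤ k)
    (hP : P.Nonempty) : (P ∩ A).Nonempty := by
  obtain ⟨v, hv⟩ := hP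
  have hvT : v ∈ A ∪ heavyBoundary G S k A := by
    rw [← hsep.union_eq]
    simp [hv]
  rcases mem_union.1 hvT with hvA | hvX
  · exact ⟨v, mem_inter.2 ⟨hv, hvA⟩⟩
  by_contra! hempty
  have hAZQ : A ⊆ Z ∪ Q := by
    intro u hu
    have huT : u ∈ Z ∪ P ∪ Q := by
      rw [hsep.union_eq]
      exact mem_union_left _ hu
    have huP : u ∉ P := fun huP => notMem_empty u (hempty ▸ mem_inter.2 ⟨huP, hu⟩)
    simp only [mem_union] at huT ⊢
    tauto
  have hlt : k < degIn G A v := (mem_filter.1 hvX).2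
  have hle : degIn G A v ≤ k := calc
    degIn G A v ≤ degIn G Z v + degIn G Q v := (degIn_mono hAZQ).trans (degIn_union_le G _ _ v)
    _ ≤ k := by
        rw [degIn_eq_zero_iff.2 (hsep.not_adj v hv), add_zero]
        exact (degIn_le_card G Z v).trans hZ
  exact hlt.not_ge hle

theorem boundaryWeight_inter_le (hsep : IsSeparation G (A ∪ heavyBoundary G S k A) Z P Q)
    (hA : A ⊆ S) :
    boundaryWeight G S k (P ∩ A) ≤ k * (#Z + #(P ∩ heavyBoundary G S k A)) +
      ∑ v ∈ lightBoundary G S k A, degIn G (P ∩ A) v := by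
  set X := heavyBoundary G S k A
  set D := lightBoundary G S k A
  have hcover : ∀ v ∈ S \ (P ∩ A), min k (degIn G (P ∩ A) v) ≠ 0 → v ∈ Z ∪ P ∩ X ∪ D := by
    intro v hv hmin
    have hQ : v ∉ Q := fun hvQ => hmin <| by
      rw [degIn_eq_zero_iff.2 fun u hu => hsep.symm.not_adj v hvQ u (mem_inter.1 hu).1,
        Nat.min_zero]
    have hS : v ∈ A ∪ X ∪ D := by
      rw [union_heavyBoundary_union_lightBoundary hA]
      exact (mem_sdiff.1 hv).1
    have hT := congrArg (v ∈ ·) hsep.union_eq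
    simp only [mem_sdiff, mem_union, mem_inter, eq_iff_iff] at hv hS hT ⊢
    tauto
  calc boundaryWeight G S k (P ∩ A)
      ≤ ∑ v ∈ Z ∪ P ∩ X ∪ D, min k (degIn G (P ∩ A) v) := sum_le_sum_of_ne_zero hcover
    _ ≤ ∑ v ∈ Z ∪ P ∩ X, min k (degIn G (P ∩ A) v) + ∑ v ∈ D, min k (degIn G (P ∩ A) v) := by
        rw [← sum_union_inter]
        exact Nat.le_add_right _ _
    _ ≤ ∑ _v ∈ Z ∪ P ∩ X, k + ∑ v ∈ D, degIn G (P ∩ A) v := by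
        gcongr
        · exact min_le_left _ _
        · exact min_le_right _ _
    _ ≤ k * (#Z + #(P ∩ X)) + ∑ v ∈ D, degIn G (P ∩ A) v := by
        rw [sum_const, smul_eq_mul, mul_comm]
        gcongr
        exact card_union_le _ _

end IsSeparation

end Separation

section Core

variable {G : SimpleGraph V} [DecidableEq V] [DecidableRel G.Adj] {S A Z P Q : Finset V} {k : ℕ}

/-- `A` is a minimal subset of `S` with at least `k` elements and boundary weight less than
`2 * k * k`. -/
def IsCore (G : SimpleGraph V) [DecidableRel G.Adj] (S : Finset V) (k : ℕ) (A : Finset V) : Prop :=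
  Minimal (fun B => B ⊆ S ∧ k ≤ #B ∧ boundaryWeight G S k B < 2 * k * k) A

theorem exists_isCore (hk : 1 ≤ k) (hS : k ≤ #S) : ∃ A, IsCore G S k A := by
  refine exists_minimal_of_wellFoundedLT _ ⟨S, Subset.rfl, hS, ?_⟩
  simp only [boundaryWeight, sdiff_self, bot_eq_empty, sum_empty]
  positivity

namespace IsCore

theorem subset (hA : IsCore G S k A) : A ⊆ S :=
  hA.prop.1

theorem weight_lt (hA : IsCore G S k A) :
    k * #(heavyBoundary G S k A) + ∑ v ∈ lightBoundary G S k A, degIn G A v < 2 * k * k := by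
  rw [← boundaryWeight_eq]
  exact hA.prop.2.2

theorem pos (hA : IsCore G S k A) : 0 < k :=
  Nat.pos_of_mul_pos_left (Nat.zero_lt_of_lt hA.weight_lt)

theorem nonempty (hA : IsCore G S k A) : A.Nonempty :=
  card_pos.1 (hA.pos.trans_le hA.prop.2.1)

theorem le_boundaryWeight_of_ssubset (hA : IsCore G S k A) {B : Finset V} (hB : B ⊂ A)
    (hk : k ≤ #B) : 2 * k * k ≤ boundaryWeight G S k B := by
  by_contra! hlt
  exact hA.not_prop_of_lt hB ⟨hB.1.trans hA.subset, hk, hlt⟩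

section MinDegree

variable (hA : IsCore G S k A) (hdeg : ∀ u ∈ S, 3 * k ≤ degIn G S u)
include hA hdeg

theorem lt_card : k < #A := by
  refine lt_of_le_of_ne hA.prop.2.1 fun hkA => hA.prop.2.2.not_ge ?_
  have hout : ∀ u ∈ A, 2 * k ≤ degIn G (S \ A) u := by
    intro u hu
    have hunion := degIn_union_le G A (S \ A) u
    rw [union_sdiff_of_subset hA.subset] at hunion
    have := hdeg u (hA.subset hu)
    have := degIn_le_card G A u
    omega
  calc 2 * k * k = ∑ _u ∈ A, 2 * k := by rw [sum_const, ← hkA, smul_eq_mul, mul_comm]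
    _ ≤ ∑ u ∈ A, degIn G (S \ A) u := sum_le_sum hout
    _ = boundaryWeight G S k A := by
        rw [← sum_degIn_comm]
        exact sum_congr rfl fun v _ => (min_eq_right (hkA ▸ degIn_le_card G A v)).symm

theorem degIn_lightBoundary_lt {u : V} (hu : u ∈ A) : degIn G (lightBoundary G S k A) u < k := by
  have hcard := card_erase_add_one hu
  have hlt := hA.lt_card hdeg
  have herase := hA.le_boundaryWeight_of_ssubset (erase_ssubset hu) (by omega)
  have hweight := hA.prop.2.2
  have := boundaryWeight_erase_add_degIn_le (G := G) (k := k) hA.subset hu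
  omega

theorem degIn_add_two_le_card_union_add {u : V} (hu : u ∈ A) :
    degIn G S u + 2 ≤ #(A ∪ heavyBoundary G S k A) + k := by
  have hsplit := degIn_le_degIn_union_heavyBoundary_add (G := G) (k := k) hA.subset u
  have hlight := hA.degIn_lightBoundary_lt hdeg hu
  have hcore : degIn G (A ∪ heavyBoundary G S k A) u < #(A ∪ heavyBoundary G S k A) :=
    degIn_lt_card (mem_union_left _ hu)
  omega

theorem two_mul_le_of_card_inter_lt (hsep : IsSeparation G (A ∪ heavyBoundary G S k A) Z P Q)
    (hPA : (P ∩ A).Nonempty) (hlt : #(P ∩ A) < k) :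
    2 * k * k ≤ k * (#Z + #(P ∩ heavyBoundary G S k A)) +
      ∑ v ∈ lightBoundary G S k A, degIn G (P ∩ A) v := by
  set X := heavyBoundary G S k A
  set D := lightBoundary G S k A
  have hcardP : #P ≤ #(P ∩ A) + #(P ∩ X) := by
    have hPT : P ⊆ A ∪ X := by
      rw [← hsep.union_eq]
      exact subset_union_right.trans subset_union_left
    calc #P = #(P ∩ A ∪ P ∩ X) := by rw [← inter_union_distrib_left, inter_eq_left.2 hPT]
      _ ≤ #(P ∩ A) + #(P ∩ X) := card_union_le _ _
  have hmem : ∀ u ∈ P ∩ A, 3 * k + 1 ≤ #Z + #(P ∩ X) + #(P ∩ A) + degIn G D u := by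
    intro u hu
    rw [mem_inter] at hu
    have hsplit : degIn G S u ≤ degIn G (A ∪ X) u + degIn G D u :=
      degIn_le_degIn_union_heavyBoundary_add hA.subset u
    have := hsep.degIn_lt hu.1
    have := hdeg u (hA.subset hu.2)
    omega
  have hsum : #(P ∩ A) * (3 * k + 1) ≤
      #(P ∩ A) * (#Z + #(P ∩ X) + #(P ∩ A)) + ∑ v ∈ D, degIn G (P ∩ A) v := by
    simpa [sum_add_distrib, sum_degIn_comm G (P ∩ A) D] using sum_le_sum hmem
  obtain ⟨u, hu⟩ := hPA
  have hu_mem := hmem u hu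
  have hu_light : degIn G D u < k := hA.degIn_lightBoundary_lt hdeg (mem_inter.1 hu).2
  have hbig : 2 * k + 2 ≤ #Z + #(P ∩ X) + #(P ∩ A) := by omega
  zify at *
  nlinarith [mul_nonneg (sub_nonneg.2 hlt.le) (sub_nonneg.2 hbig)]

theorem two_mul_le_of_isSeparation (hsep : IsSeparation G (A ∪ heavyBoundary G S k A) Z P Q)
    (hPA : (P ∩ A).Nonempty) (hQA : (Q ∩ A).Nonempty) :
    2 * k * k ≤ k * (#Z + #(P ∩ heavyBoundary G S k A)) +
      ∑ v ∈ lightBoundary G S k A, degIn G (P ∩ A) v := by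
  rcases lt_or_ge #(P ∩ A) k with hlt | hge
  · exact hA.two_mul_le_of_card_inter_lt hdeg hsep hPA hlt
  refine (hA.le_boundaryWeight_of_ssubset ?_ hge).trans (hsep.boundaryWeight_inter_le hA.subset)
  obtain ⟨v, hv⟩ := hQA
  rw [mem_inter] at hv
  exact ssubset_iff_of_subset inter_subset_right |>.2
    ⟨v, hv.2, fun hvP => disjoint_left.1 hsep.disjoint (mem_inter.1 hvP).1 hv.1⟩

theorem lt_card_of_isSeparation (hsep : IsSeparation G (A ∪ heavyBoundary G S k A) Z P Q)
    (hP : P.Nonempty) (hQ : Q.Nonempty) : k < #Z := by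
  by_contra! hZ
  have hPA := hsep.inter_nonempty hZ hP
  have hQA := hsep.symm.inter_nonempty hZ hQ
  have hP_le := hA.two_mul_le_of_isSeparation hdeg hsep hPA hQA
  have hQ_le := hA.two_mul_le_of_isSeparation hdeg hsep.symm hQA hPA
  have hdisj (B : Finset V) : Disjoint (P ∩ B) (Q ∩ B) :=
    hsep.disjoint.mono inter_subset_left inter_subset_left
  have hsub (B : Finset V) : P ∩ B ∪ Q ∩ B ⊆ B := union_subset inter_subset_right inter_subset_right
  set X := heavyBoundary G S k A
  set D := lightBoundary G S k A
  have hX : #(P ∩ X) + #(Q ∩ X) ≤ #X := by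
    rw [← card_union_of_disjoint (hdisj X)]
    exact card_le_card (hsub X)
  have hD : ∑ v ∈ D, degIn G (P ∩ A) v + ∑ v ∈ D, degIn G (Q ∩ A) v ≤ ∑ v ∈ D, degIn G A v := by
    simp_rw [← sum_add_distrib, ← degIn_union_of_disjoint (hdisj A)]
    exact sum_le_sum fun v _ => degIn_mono (hsub A)
  have hweight := hA.weight_lt
  nlinarith [Nat.mul_le_mul_left k hX, Nat.mul_le_mul_left k hZ]

end MinDegree

end IsCore

end Core

section Extension

variable {G : SimpleGraph V} [DecidableRel G.Adj] {A X D : Finset V} {k : ℕ} {ι β : Type*}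
  {h : V → ι} {c : V → β}

theorem exists_isColoringOn_forall_ne [Fintype β] [DecidableEq ι] [DecidableEq β] {K ℓ : ℕ}
    (hh : IsColoringOn G A h) (hKℓ : K ≤ ℓ) (hℓ : #(A.image h) ≤ ℓ)
    (hD : ∀ u ∈ A, degIn G D u < K)
    (hsum : ∑ v ∈ D with c v ∉ X.image c, degIn G A v + K * ℓ < K * (#(X.image c)ᶜ + 1)) :
    ∃ g : V → β, IsColoringOn G A g ∧
      ∀ u ∈ A, (∀ v ∈ X, g u ≠ c v) ∧ ∀ v ∈ D, G.Adj u v → g u ≠ c v := by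
  set D' := {v ∈ D | c v ∉ X.image c}
  have hforbidden (u : V) : #({v ∈ D' | G.Adj u v}.image c) ≤ degIn G D' u := card_image_le
  obtain ⟨g, hgC, hgh⟩ := exists_isRefinedAssignment (A := A) (C := (X.image c)ᶜ)
    (F := fun u => {v ∈ D' | G.Adj u v}.image c) h hKℓ hℓ
    (fun u hu => (hforbidden u).trans_lt ((degIn_mono (filter_subset _ _)).trans_lt (hD u hu)))
    (lt_of_le_of_lt (by
      rw [sum_degIn_comm G A D']
      gcongr with u
      exact hforbidden u) hsum)
  refine ⟨g, fun u hu v hv huv hguv => hh u hu v hv huv (hgh u hu v hv hguv), fun u hu => ?_⟩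
  obtain ⟨hgX, hgD⟩ := mem_sdiff.1 (hgC u hu)
  rw [mem_compl] at hgX
  refine ⟨fun v hv hguv => hgX (hguv ▸ mem_image_of_mem c hv), fun v hv huv hguv => hgD ?_⟩
  rw [hguv] at hgX ⊢
  exact mem_image_of_mem c (mem_filter.2 ⟨mem_filter.2 ⟨hv, hgX⟩, huv⟩)

theorem exists_isColoringOn_forall_ne_of_card_le [Fintype β] [DecidableEq ι] [DecidableEq β]
    {ℓ : ℕ} (hh : IsColoringOn G A h) (hkℓ : k ≤ ℓ)
    (hℓ : #(A.image h) ≤ ℓ) (hD : ∀ u ∈ A, degIn G D u < k)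
    (hweight : k * #X + ∑ v ∈ D, degIn G A v < 2 * k * k)
    (hcard : ℓ + 2 * k ≤ #(X.image c)ᶜ + 1 + #X) :
    ∃ g : V → β, IsColoringOn G A g ∧
      ∀ u ∈ A, (∀ v ∈ X, g u ≠ c v) ∧ ∀ v ∈ D, G.Adj u v → g u ≠ c v := by
  refine exists_isColoringOn_forall_ne hh hkℓ hℓ hD ?_
  have hle : ∑ v ∈ D with c v ∉ X.image c, degIn G A v ≤ ∑ v ∈ D, degIn G A v :=
    sum_le_sum_of_subset (filter_subset _ _)
  linarith [Nat.mul_le_mul_left k hcard]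

theorem exists_isColoringOn_of_filter_ne [DecidableEq V] (hh : IsColoringOn G (A ∪ X) h)
    (hinj : Set.InjOn c X) {x : V} (hx : x ∈ X)
    (hxD : ∀ v ∈ D, c v = c x → degIn G A v = 0) {g : V → β}
    (hg : IsColoringOn G {u ∈ A | h u ≠ h x} g)
    (hgc : ∀ u ∈ A, h u ≠ h x → (∀ v ∈ X, g u ≠ c v) ∧ ∀ v ∈ D, G.Adj u v → g u ≠ c v) :
    ∃ g : V → β, IsColoringOn G A g ∧ ∀ u ∈ A, ∀ v ∈ X ∪ D, G.Adj u v → g u ≠ c v := by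
  classical
  have hclass : IsColoringOn G {u ∈ A | h u = h x} fun _ => c x := fun u hu v hv huv =>
    absurd (hu.2.trans hv.2.symm) (hh u (Or.inl hu.1) v (Or.inl hv.1) huv)
  have hcol := hclass.piecewise hg fun u _ v hv _ => ((hgc v hv.1 hv.2).1 x hx).symm
  refine ⟨_, hcol.mono fun u hu => ?_, fun u hu v hv huv => ?_⟩
  · exact (em (h u = h x)).imp (And.intro hu) (And.intro hu)
  by_cases hux : h u = h x
  · have hu_class : u ∈ {u | u ∈ A ∧ h u = h x} := ⟨hu, hux⟩
    rw [Set.piecewise_eq_of_mem _ _ _ hu_class]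
    intro heq
    rcases mem_union.1 hv with hvX | hvD
    · obtain rfl := hinj hx hvX heq
      exact hh u (Or.inl hu) x (Or.inr hx) huv hux
    · exact degIn_eq_zero_iff.1 (hxD v hvD heq.symm) u hu huv.symm
  · have hu_class : u ∉ {u | u ∈ A ∧ h u = h x} := fun hu => hux hu.2
    rw [Set.piecewise_eq_of_notMem _ _ _ hu_class]
    obtain ⟨hgX, hgD⟩ := hgc u hu hux
    exact (mem_union.1 hv).elim (hgX v) fun hvD => hgD v hvD huv

-- The vertices of `A` in the class of `x` under `h` take the colour `c x`, which none of their
-- neighbours in `X ∪ D` has; this saves the one colour class that is missing otherwise.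
theorem exists_isColoringOn_of_unused_color [DecidableEq V] [Fintype ι] [Fintype β]
    (hh : IsColoringOn G (A ∪ X) h) (hkι : k < Fintype.card ι) (hD : ∀ u ∈ A, degIn G D u < k)
    (hweight : k * #X + ∑ v ∈ D, degIn G A v < 2 * k * k)
    (hcard : Fintype.card ι + 2 * k ≤ Fintype.card β + 2) (hinj : Set.InjOn c X) {x : V}
    (hx : x ∈ X) (hxD : ∀ v ∈ D, c v = c x → degIn G A v = 0) :
    ∃ g : V → β, IsColoringOn G A g ∧ ∀ u ∈ A, ∀ v ∈ X ∪ D, G.Adj u v → g u ≠ c v := by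
  classical
  set A' := {u ∈ A | h u ≠ h x}
  have hA' : A' ⊆ A := filter_subset _ _
  have hcard_image : #(A'.image h) < Fintype.card ι :=
    card_lt_univ_of_notMem (x := h x) (by simp [A'])
  have hcard_compl := card_add_card_compl (X.image c)
  rw [card_image_of_injOn hinj] at hcard_compl
  have hweight' : ∑ v ∈ D, degIn G A' v ≤ ∑ v ∈ D, degIn G A v :=
    sum_le_sum fun v _ => degIn_mono hA'
  obtain ⟨g, hg, hgc⟩ := exists_isColoringOn_forall_ne_of_card_le (X := X) (c := c)
    (ℓ := Fintype.card ι - 1) (hh.mono (Set.subset_union_of_subset_left hA' _)) (by omega)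
    (by omega) (fun u hu => hD u (hA' hu)) (by omega) (by omega)
  exact exists_isColoringOn_of_filter_ne hh hinj hx hxD (by simpa [A'] using hg)
    fun u hu hux => hgc u (mem_filter.2 ⟨hu, hux⟩)

theorem card_add_sum_degIn_le [DecidableEq β] (hinj : Set.InjOn c X)
    (hused : ∀ x ∈ X, ∃ v ∈ D, c v = c x ∧ degIn G A v ≠ 0) :
    #X + ∑ v ∈ D with c v ∉ X.image c, degIn G A v ≤ ∑ v ∈ D, degIn G A v := by
  classical
  choose! r hrD hrc hrA using hused
  have hr_inj : Set.InjOn r X := fun x hx y hy hxy =>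
    hinj hx hy (by rw [← hrc x hx, ← hrc y hy, hxy])
  rw [← sum_filter_add_sum_filter_not D (fun v => c v ∈ X.image c)]
  gcongr
  calc #X = ∑ _v ∈ X.image r, 1 := by rw [← card_eq_sum_ones, card_image_of_injOn hr_inj]
    _ ≤ ∑ v ∈ X.image r, degIn G A v := by
        refine sum_le_sum fun v hv => ?_
        obtain ⟨x, hx, rfl⟩ := mem_image.1 hv
        exact Nat.one_le_iff_ne_zero.2 (hrA x hx)
    _ ≤ ∑ v ∈ D with c v ∈ X.image c, degIn G A v := by
        refine sum_le_sum_of_subset fun v hv => ?_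
        obtain ⟨x, hx, rfl⟩ := mem_image.1 hv
        exact mem_filter.2 ⟨hrD x hx, hrc x hx ▸ mem_image_of_mem c hx⟩

theorem exists_isColoringOn_of_coloring_union [DecidableEq V] [Fintype ι] [Fintype β]
    (hh : IsColoringOn G (A ∪ X) h) (hkι : k < Fintype.card ι) (hD : ∀ u ∈ A, degIn G D u < k)
    (hweight : k * #X + ∑ v ∈ D, degIn G A v < 2 * k * k)
    (hcard : Fintype.card ι + 2 * k ≤ Fintype.card β + 2) (c : V → β) :
    ∃ g : V → β, IsColoringOn G A g ∧ ∀ u ∈ A, ∀ v ∈ X ∪ D, G.Adj u v → g u ≠ c v := by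
  classical
  by_cases hunused : Set.InjOn c X ∧ ∃ x ∈ X, ∀ v ∈ D, c v = c x → degIn G A v = 0
  · obtain ⟨hinj, x, hx, hxD⟩ := hunused
    exact exists_isColoringOn_of_unused_color hh hkι hD hweight hcard hinj hx hxD
  suffices hne : ∃ g : V → β, IsColoringOn G A g ∧
      ∀ u ∈ A, (∀ v ∈ X, g u ≠ c v) ∧ ∀ v ∈ D, G.Adj u v → g u ≠ c v by
    obtain ⟨g, hg, hgc⟩ := hne
    exact ⟨g, hg, fun u hu v hv huv =>
      (mem_union.1 hv).elim ((hgc u hu).1 v) fun hvD => (hgc u hu).2 v hvD huv⟩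
  have hhA : IsColoringOn G A h := hh.mono Set.subset_union_left
  have hhι : #(A.image h) ≤ Fintype.card ι := card_le_univ _
  have hcompl := card_add_card_compl (X.image c)
  by_cases hinj : Set.InjOn c X
  · push Not at hunused
    have hsum := card_add_sum_degIn_le hinj (hunused hinj)
    rw [card_image_of_injOn hinj] at hcompl
    have hk : 0 < k := Nat.pos_of_mul_pos_left (Nat.zero_lt_of_lt hweight)
    refine exists_isColoringOn_forall_ne hhA hkι hhι
      (fun u hu => (hD u hu).trans (Nat.lt_succ_self k)) ?_
    rw [← hcompl] at hcard
    nlinarith [Nat.mul_le_mul_left k hcard]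
  · have himage : #(X.image c) < #X :=
      lt_of_le_of_ne card_image_le fun heq => hinj (card_image_iff.1 heq)
    exact exists_isColoringOn_forall_ne_of_card_le hhA hkι.le hhι hD hweight (by omega)

end Extension

theorem IsCore.not_colorable {G : SimpleGraph V} [DecidableEq V] [DecidableRel G.Adj]
    {S A : Finset V} {k m : ℕ} (hA : IsCore G S k A) (hS : IsCritical G m S) (hkm : 3 * k ≤ m) :
    ¬ (G.induce ((A ∪ heavyBoundary G S k A : Finset V) : Set V)).Colorable (m + 2 - 2 * k) := by
  intro hcol
  have hk := hA.pos
  have : NeZero m := ⟨by omega⟩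
  have : NeZero (m + 2 - 2 * k) := ⟨by omega⟩
  obtain ⟨h, hh⟩ := exists_isColoringOn hcol
  rw [coe_union] at hh
  obtain ⟨c, hc⟩ := exists_isColoringOn <|
    hS.colorable_of_ssubset (sdiff_ssubset hA.subset hA.nonempty)
  obtain ⟨g, hg, hgc⟩ := exists_isColoringOn_of_coloring_union hh
    (by rw [Fintype.card_fin]; omega)
    (fun u hu => hA.degIn_lightBoundary_lt (fun v hv => hkm.trans (hS.le_degIn hv)) hu)
    hA.weight_lt (by simp only [Fintype.card_fin]; omega) c
  rw [heavyBoundary_union_lightBoundary] at hgc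
  have hgc_col := hg.piecewise hc hgc
  rw [← coe_union, union_sdiff_of_subset hA.subset] at hgc_col
  exact hS.prop hgc_col.colorable

theorem IsCore.le_card_union_add {G : SimpleGraph V} [DecidableEq V] [DecidableRel G.Adj]
    {S A : Finset V} {k m : ℕ} (hA : IsCore G S k A) (hS : IsCritical G m S) (hkm : 3 * k ≤ m) :
    m + 2 ≤ #(A ∪ heavyBoundary G S k A) + k := by
  obtain ⟨u, hu⟩ := hA.nonempty
  have hmu := hS.le_degIn (hA.subset hu)
  have := hA.degIn_add_two_le_card_union_add (fun v hv => hkm.trans (hS.le_degIn hv)) hu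
  omega

theorem kConnected_induce {G : SimpleGraph V} [DecidableEq V] {T : Finset V} {n : ℕ} (hT : n < #T)
    (hsep : ∀ Z P Q, IsSeparation G T Z P Q → P.Nonempty → Q.Nonempty → n ≤ #Z) :
    KConnected (G.induce (T : Set V)) n := by
  refine ⟨by simpa using hT, ?_⟩
  rintro Y hY ⟨P, Q, hP, hQ, hPQ, hcover, hadj⟩
  classical
  let toFinset (W : Set (T : Set V)) : Finset V := W.toFinset.map (.subtype _)
  have hcoe (W : Set (T : Set V)) : (toFinset W : Set V) = Subtype.val '' W := by simp [toFinset]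
  have hmem (W : Set (T : Set V)) (v : V) : v ∈ toFinset W ↔ ∃ w ∈ W, ↑w = v := by
    rw [← mem_coe, hcoe, Set.mem_image]
  have hcard : #(toFinset Y) = Y.ncard := by rw [card_map, Set.ncard_eq_toFinset_card']
  refine hY.not_ge (hcard ▸ hsep (toFinset Y) (toFinset P) (toFinset Q) ⟨?_, ?_, ?_⟩ ?_ ?_)
  · rw [← coe_inj]
    push_cast
    rw [hcoe, hcoe, hcoe, ← Set.image_union, ← Set.image_union, Set.union_assoc, hcover,
      Set.union_compl_self, Set.image_univ, Subtype.range_coe]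
  · rw [← disjoint_coe, hcoe, hcoe]
    exact (Set.disjoint_image_iff Subtype.val_injective).2 hPQ
  · intro u hu v hv
    obtain ⟨u, huP, rfl⟩ := (hmem P _).1 hu
    obtain ⟨v, hvQ, rfl⟩ := (hmem Q _).1 hv
    exact hadj u huP v hvQ
  · rw [← coe_nonempty, hcoe]
    exact hP.image _
  · rw [← coe_nonempty, hcoe]
    exact hQ.image _

theorem main_theorem_general (k : ℕ) (hk : 1 ≤ k) (G : SimpleGraph V) (n : ℕ)
    (hn : n ≤ G.chromaticNumber) (hkn : 3 * k < n) :
    ∃ H : G.Subgraph, KConnected H.coe (k + 1) ∧ n - k < Nat.card H.verts ∧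
      ((n + 2 - 2 * k : ℕ) : ℕ∞) ≤ H.coe.chromaticNumber := by
  classical
  obtain ⟨m, rfl⟩ : ∃ m, n = m + 1 := ⟨n - 1, by omega⟩
  have hkm : 3 * k ≤ m := by omega
  obtain ⟨S, hS⟩ : ∃ S, IsCritical G m S := exists_isCritical fun hcol =>
    (hn.trans hcol.chromaticNumber_le).not_gt (by exact_mod_cast Nat.lt_succ_self m)
  have hdeg : ∀ u ∈ S, 3 * k ≤ degIn G S u := fun u hu => hkm.trans (hS.le_degIn hu)
  obtain ⟨A, hA⟩ := exists_isCore (G := G) hk (by linarith [hS.lt_card])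
  have hcard := hA.le_card_union_add hS hkm
  refine ⟨(⊤ : G.Subgraph).induce (A ∪ heavyBoundary G S k A : Finset V), ?_, ?_, ?_⟩
  · rw [← SimpleGraph.induce_eq_coe_induce_top]
    exact kConnected_induce (by omega) fun _ _ _ hsep => hA.lt_card_of_isSeparation hdeg hsep
  · rw [SimpleGraph.Subgraph.induce_verts, Nat.card_coe_set_eq, Set.ncard_coe_finset]
    omega
  · rw [← SimpleGraph.induce_eq_coe_induce_top]
    refine SimpleGraph.le_chromaticNumber_iff_colorable.2 fun ℓ hℓ => ?_
    by_contra! hlt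
    exact hA.not_colorable hS hkm (hℓ.mono (by omega))

/-- Main theorem: for every `k ≥ 1`, every graph `G` with `χ(G) ≥ (3 + 1/16)k`
(i.e. `49k ≤ 16·χ(G)`) contains a `(k+1)`-connected subgraph with more than
`χ(G) − k` vertices and chromatic number at least `χ(G) − 2k + 2`. -/
theorem main_theorem [Fintype V] (k : ℕ) (hk : 1 ≤ k) (G : SimpleGraph V)
    (n : ℕ) (hn : G.chromaticNumber = n) (h : 49 * k ≤ 16 * n) :
    ∃ H : G.Subgraph, KConnected H.coe (k + 1) ∧ n - k < Nat.card H.verts ∧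
      ((n + 2 - 2 * k : ℕ) : ℕ∞) ≤ H.coe.chromaticNumber :=
  main_theorem_general k hk G n hn.ge (by omega)
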